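/- Let X ∈ ℝ and define the Nash-equilibrium strategies of the directional trader and the arbitrageur by ξ = (X/2)(v + w) and η = (X/2)(v − w). Then ξ is time-symmetric and η is time-antisymmetric: ξ_k = ξ_{N+2−k} and η_k = −η_{N+2−k} for every k = 1, 2, …, N+1. -/

import Mathlib

open Matrix

/-!
Write `J` for time reversal and `Γ̃` for the lower half of `Γ`. Reversing time transposes the
strict order, so `J Γ̃ J = Γ̃ᵀ = Γ - Γ̃`, and hence `J (Γ_θ + Γ̃) J = (Γ_θ - Γ̃) + Γ`. For a
constant kernel `Γ = G e eᵀ`, this is a rank-one perturbation of `Γ_θ - Γ̃` which, by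
Sherman–Morrison, only rescales the solution `x` of `(Γ_θ - Γ̃) x = e`; the normalization
`eᵀ x = 1` undoes the rescaling. Thus `w` is the time reversal of `v`.
-/

section FundamentalSolution

variable {ι κ K : Type*} [Fintype ι] [DecidableEq ι] [Fintype κ] [DecidableEq κ] [Field K]

/-- The solution of `A x ∈ K e` normalized by `eᵀ x = 1`, for an invertible matrix `A` such that
`eᵀ A⁻¹ e ≠ 0`. For `e = (1, …, 1)ᵀ` and `A = Γ_θ ± Γ̃` these are the fundamental solutions `v`
and `w` of the Schied–Zhang game. -/
noncomputable def fundamentalSolution (A : Matrix ι ι K) (e : ι → K) : ι → K :=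
  (e ⬝ᵥ (A⁻¹ *ᵥ e))⁻¹ • (A⁻¹ *ᵥ e)

lemma fundamentalSolution_submatrix (A : Matrix κ κ K) (e : κ → K) (σ : ι ≃ κ) :
    fundamentalSolution (A.submatrix σ σ) (e ∘ σ) = fundamentalSolution A e ∘ σ := by
  have solve : (A.submatrix σ σ)⁻¹ *ᵥ (e ∘ σ) = (A⁻¹ *ᵥ e) ∘ σ := by
    rw [inv_submatrix_equiv, submatrix_mulVec_equiv, Function.comp_assoc, σ.self_comp_symm,
      Function.comp_id]
  rw [fundamentalSolution, solve, comp_equiv_dotProduct_comp_equiv]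
  rfl

lemma inv_mulVec_eq_smul_inv_add_vecMulVec_mulVec {R : Type*} [CommRing R] {A : Matrix ι ι R}
    {a b : ι → R} (hA : IsUnit A) (hAab : IsUnit (A + vecMulVec a b)) :
    A⁻¹ *ᵥ a = (1 + b ⬝ᵥ (A⁻¹ *ᵥ a)) • ((A + vecMulVec a b)⁻¹ *ᵥ a) := by
  have image : (A + vecMulVec a b) *ᵥ (A⁻¹ *ᵥ a) = (1 + b ⬝ᵥ (A⁻¹ *ᵥ a)) • a := by
    rw [add_mulVec, mulVec_mulVec, mul_nonsing_inv _ ((isUnit_iff_isUnit_det A).1 hA), one_mulVec,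
      vecMulVec_mulVec, op_smul_eq_smul, add_smul, one_smul]
  rw [← mulVec_smul, ← image, mulVec_mulVec,
    nonsing_inv_mul _ ((isUnit_iff_isUnit_det _).1 hAab), one_mulVec]

lemma fundamentalSolution_add_smul_vecMulVec {A : Matrix ι ι K} {e : ι → K} {c : K}
    (hA : IsUnit A) (hAe : IsUnit (A + c • vecMulVec e e)) :
    fundamentalSolution (A + c • vecMulVec e e) e = fundamentalSolution A e := by
  set s := 1 + (c • e) ⬝ᵥ (A⁻¹ *ᵥ e) with hs
  have rescale : A⁻¹ *ᵥ e = s • ((A + c • vecMulVec e e)⁻¹ *ᵥ e) := by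
    rw [← vecMulVec_smul] at hAe ⊢
    exact inv_mulVec_eq_smul_inv_add_vecMulVec_mulVec hA hAe
  have s_ne_zero : s ≠ 0 := by
    intro h
    rw [h, zero_smul] at rescale
    rw [rescale, dotProduct_zero, add_zero, h] at hs
    exact zero_ne_one hs
  rw [fundamentalSolution, fundamentalSolution, rescale, dotProduct_smul, smul_eq_mul,
    _root_.mul_inv_rev, smul_smul, inv_mul_cancel_right₀ s_ne_zero]

lemma fundamentalSolution_add_comp_eq_sub {A T : Matrix ι ι K} {e : ι → K} {c : K}
    {σ : Equiv.Perm ι} (hA : A.submatrix σ σ = A) (hT : T + T.submatrix σ σ = c • vecMulVec e e)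
    (he : e ∘ σ = e) (h_add : IsUnit (A + T)) (h_sub : IsUnit (A - T)) :
    fundamentalSolution (A + T) e ∘ σ = fundamentalSolution (A - T) e := by
  have conj : (A + T).submatrix σ σ = A - T + c • vecMulVec e e := by
    rw [← hT, submatrix_add, Pi.add_apply, Pi.add_apply, hA]
    abel
  have h_conj : IsUnit ((A + T).submatrix σ σ) := (isUnit_submatrix_equiv σ σ).2 h_add
  rw [← fundamentalSolution_submatrix, he, conj,
    fundamentalSolution_add_smul_vecMulVec h_sub (conj ▸ h_conj)]

end FundamentalSolution

section LowerHalf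

variable {ι κ K : Type*} [LinearOrder ι] [LinearOrder κ] [Field K]

/-- The matrix `Γ̃` of the Schied–Zhang game: the lower triangular part of `Γ`, with the diagonal
halved. -/
noncomputable def lowerHalf (Γ : Matrix ι ι K) : Matrix ι ι K :=
  of fun i j => if j < i then Γ i j else if i = j then Γ i j / 2 else 0

lemma lowerHalf_add_transpose_lowerHalf_transpose [NeZero (2 : K)] (Γ : Matrix ι ι K) :
    lowerHalf Γ + (lowerHalf Γᵀ)ᵀ = Γ := by
  ext i j
  rcases lt_trichotomy i j with h | rfl | h
  · simp [lowerHalf, h, h.not_gt, h.ne]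
  · simp [lowerHalf]
  · simp [lowerHalf, h, h.not_gt, h.ne]

lemma lowerHalf_submatrix_of_strictAnti {σ : ι → κ} (hσ : StrictAnti σ) (Γ : Matrix κ κ K) :
    (lowerHalf Γ).submatrix σ σ = (lowerHalf (Γ.submatrix σ σ)ᵀ)ᵀ := by
  ext i j
  simp [lowerHalf, hσ.lt_iff_gt, hσ.injective.eq_iff, eq_comm]

variable [Fintype ι]

lemma two_mul_dotProduct_lowerHalf_mulVec [NeZero (2 : K)] {Γ : Matrix ι ι K} (hΓ : Γ.IsSymm)
    (x : ι → K) : 2 * (x ⬝ᵥ (lowerHalf Γ *ᵥ x)) = x ⬝ᵥ (Γ *ᵥ x) := by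
  have split := lowerHalf_add_transpose_lowerHalf_transpose Γ
  rw [hΓ.eq] at split
  conv_rhs => rw [← split, add_mulVec, dotProduct_add, dotProduct_transpose_mulVec]
  ring

end LowerHalf

section Invertibility

variable {ι K : Type*} [Fintype ι] [Field K]

lemma isUnit_of_dotProduct_mulVec_ne_zero [DecidableEq ι] {A : Matrix ι ι K}
    (hA : ∀ x ≠ 0, x ⬝ᵥ (A *ᵥ x) ≠ 0) : IsUnit A := by
  rw [isUnit_iff_isUnit_det, isUnit_iff_ne_zero]
  intro hdet
  obtain ⟨x, hx, hAx⟩ := exists_mulVec_eq_zero_iff.2 hdet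
  exact hA x hx (by rw [hAx, dotProduct_zero])

lemma dotProduct_self_pos {R : Type*} [Ring R] [LinearOrder R] [IsStrictOrderedRing R] {x : ι → R}
    (hx : x ≠ 0) : 0 < x ⬝ᵥ x :=
  lt_of_le_of_ne' (Finset.sum_nonneg fun i _ => mul_self_nonneg (x i))
    (dotProduct_self_eq_zero.not.2 hx)

lemma isUnit_add_smul_one_add_smul_lowerHalf [LinearOrder ι] [LinearOrder K] [IsStrictOrderedRing K]
    {Γ : Matrix ι ι K} {t c : K} (hΓ : Γ.IsSymm) (hΓ_nonneg : ∀ x, 0 ≤ x ⬝ᵥ (Γ *ᵥ x)) (ht : 0 < t)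
    (hc : -2 ≤ c) : IsUnit (Γ + t • 1 + c • lowerHalf Γ) := by
  refine isUnit_of_dotProduct_mulVec_ne_zero fun x hx => ne_of_gt ?_
  have form_eq : x ⬝ᵥ ((Γ + t • 1 + c • lowerHalf Γ) *ᵥ x) =
      (1 + c / 2) * (x ⬝ᵥ (Γ *ᵥ x)) + t * (x ⬝ᵥ x) := by
    simp only [add_mulVec, smul_mulVec, one_mulVec, dotProduct_add, dotProduct_smul, smul_eq_mul]
    linear_combination (c / 2) * two_mul_dotProduct_lowerHalf_mulVec hΓ x
  rw [form_eq]
  exact add_pos_of_nonneg_of_pos (mul_nonneg (by linarith) (hΓ_nonneg x))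
    (mul_pos ht (dotProduct_self_pos hx))

end Invertibility

section Game

variable {K : Type*} [Field K] [LinearOrder K] [IsStrictOrderedRing K]

lemma fundamentalSolution_add_lowerHalf_comp_eq_sub {ι : Type*} [Fintype ι] [LinearOrder ι]
    {σ : Equiv.Perm ι} (hσ : StrictAnti σ) {e : ι → K} (he : e ∘ σ = e) {G t : K} (hG : 0 ≤ G)
    (ht : 0 < t) {Γ : Matrix ι ι K} (hΓ : Γ = G • vecMulVec e e) :
    fundamentalSolution (Γ + t • 1 + lowerHalf Γ) e ∘ σ =
      fundamentalSolution (Γ + t • 1 - lowerHalf Γ) e := by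
  have symm : Γ.IsSymm := by
    rw [IsSymm, hΓ, transpose_smul, transpose_vecMulVec]
  have nonneg (x : ι → K) : 0 ≤ x ⬝ᵥ (Γ *ᵥ x) := by
    have : x ⬝ᵥ (Γ *ᵥ x) = G * (e ⬝ᵥ x) ^ 2 := by
      rw [hΓ, smul_mulVec, vecMulVec_mulVec, op_smul_eq_smul, dotProduct_smul, dotProduct_smul,
        dotProduct_comm x e, smul_eq_mul, smul_eq_mul, sq]
    rw [this]
    positivity
  have invariant : Γ.submatrix σ σ = Γ := by
    have e_apply (i : ι) : e (σ i) = e i := congrFun he i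
    ext i j
    simp [hΓ, vecMulVec_apply, e_apply]
  have add_reversal : lowerHalf Γ + (lowerHalf Γ).submatrix σ σ = G • vecMulVec e e := by
    rw [lowerHalf_submatrix_of_strictAnti hσ, invariant,
      lowerHalf_add_transpose_lowerHalf_transpose, hΓ]
  refine fundamentalSolution_add_comp_eq_sub ?_ add_reversal he ?_ ?_
  · rw [submatrix_add, submatrix_smul, Pi.add_apply, Pi.add_apply, invariant]
    simp
  · simpa using isUnit_add_smul_one_add_smul_lowerHalf symm nonneg ht (c := 1) (by linarith)
  · simpa [sub_eq_add_neg] using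
      isUnit_add_smul_one_add_smul_lowerHalf symm nonneg ht (c := -1) (by linarith)

theorem stmt_6_general {n : ℕ} {G θ : K} (hG : 0 ≤ G) (hθ : 0 < θ) (X : K) {e : Fin n → K}
    (he : ∀ k, e k.rev = e k) {Γ : Matrix (Fin n) (Fin n) K} (hΓ : Γ = G • vecMulVec e e)
    {v w : Fin n → K} (hv : v = fundamentalSolution (Γ + (2 * θ) • 1 + lowerHalf Γ) e)
    (hw : w = fundamentalSolution (Γ + (2 * θ) • 1 - lowerHalf Γ) e) (k : Fin n) :
    ((X / 2) • (v + w)) k = ((X / 2) • (v + w)) k.rev ∧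
      ((X / 2) • (v - w)) k = -((X / 2) • (v - w)) k.rev := by
  have reversal : v ∘ Fin.revPerm = w := by
    rw [hv, hw]
    exact fundamentalSolution_add_lowerHalf_comp_eq_sub Fin.rev_strictAnti (funext he) hG
      (mul_pos two_pos hθ) hΓ
  have w_apply (i : Fin n) : w i = v i.rev := (congrFun reversal i).symm
  simp only [Pi.smul_apply, Pi.add_apply, Pi.sub_apply, smul_eq_mul, w_apply, Fin.rev_rev]
  constructor <;> ring

end Game

/-- With `ξ = (X/2)(v + w)` and `η = (X/2)(v − w)` the Nash-equilibrium strategies of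
the directional trader and the arbitrageur, `ξ` is time-symmetric and `η` is
time-antisymmetric: `ξ_k = ξ_{N+2−k}` and `η_k = −η_{N+2−k}` for `k = 1,…,N+1`. -/
theorem stmt_6 (N : ℕ) (hN : 1 ≤ N) (G θ X : ℝ) (hG : 0 < G) (hθ : 0 < θ)
    (Γ Γθ Γt : Matrix (Fin (N+1)) (Fin (N+1)) ℝ)
    (hΓ : ∀ i j : Fin (N+1), Γ i j = G)
    (hΓθ : Γθ = Γ + (2*θ) • (1 : Matrix (Fin (N+1)) (Fin (N+1)) ℝ))
    (hΓt : ∀ i j : Fin (N+1), Γt i j = if j < i then G else if i = j then G/2 else 0)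
    (e : Fin (N+1) → ℝ) (he : e = fun _ => 1)
    (v w : Fin (N+1) → ℝ)
    (hv : v = (e ⬝ᵥ ((Γθ + Γt)⁻¹ *ᵥ e))⁻¹ • ((Γθ + Γt)⁻¹ *ᵥ e))
    (hw : w = (e ⬝ᵥ ((Γθ - Γt)⁻¹ *ᵥ e))⁻¹ • ((Γθ - Γt)⁻¹ *ᵥ e))
    (ξ η : Fin (N+1) → ℝ)
    (hξ : ξ = (X/2) • (v + w))
    (hη : η = (X/2) • (v - w)) :
    ∀ k : Fin (N+1), ξ k = ξ k.rev ∧ η k = -η k.rev := by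
  have kernel_eq : Γ = G • vecMulVec e e := by ext i j; simp [hΓ, he, vecMulVec_apply]
  have lowerHalf_eq : Γt = lowerHalf Γ := by ext i j; simp [hΓt, hΓ, lowerHalf]
  subst hΓθ lowerHalf_eq hξ hη
  exact stmt_6_general hG.le hθ X (by simp [he]) kernel_eq hv hw
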